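/- arXiv:2308.13732 — 2 statements merged into one kernel-verified Lean document; each statement's English description precedes it below -/
import Mathlib

section
/- Fix an integer m ≥ 1 and m distinct points t¹, …, t^m ∈ ℝ^N, and for l = 1, …, m define the Voronoi cell Γ_l = {t ∈ ℝ^N : ρ̃(t, t^l) = min_{1≤k≤m} ρ̃(t, t^k)}. Then each Γ_l satisfies the following anisotropic star shape property at t^l: if t ∈ Γ_l, then for every ε ∈ (0,1) the point t^l + ε^E (t − t^l), whose j-th coordinate is t^l_j + ε^{1/H_j}(t_j − t^l_j) (where E = diag(1/H₁, …, 1/H_N)), also belongs to Γ_l. (Lemma 2.2(ii).) -/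
open MeasureTheory

/-- The anisotropic metric `ρ̃(t,s) = max_{1 ≤ j ≤ N} |t_j - s_j|^{H_j}`. -/
noncomputable def rhoTilde {N : ℕ} (H : Fin N → ℝ) (t s : Fin N → ℝ) : ℝ :=
  ⨆ j, |t j - s j| ^ H j

/-- Lemma 2.2(ii): each Voronoi cell `Γ_l` (with respect to the anisotropic metric `ρ̃`)
satisfies the anisotropic star shape property at its generating point `t^l`: if `x ∈ Γ_l`,
then for every `ε ∈ (0,1)` the point `t^l + ε^E (x - t^l)`, whose `j`-th coordinate is
`t^l_j + ε^{1/H_j} (x_j - t^l_j)`, belongs to `Γ_l`. -/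
theorem voronoi_star_shape
    (N : ℕ) (hN : 1 ≤ N) (H : Fin N → ℝ) (hH : ∀ j, H j ∈ Set.Ioo (0 : ℝ) 1)
    (m : ℕ) (hm : 1 ≤ m) (t : Fin m → Fin N → ℝ) (ht : Function.Injective t)
    (l : Fin m) (x : Fin N → ℝ)
    (hx : rhoTilde H x (t l) = ⨅ k : Fin m, rhoTilde H x (t k))
    (ε : ℝ) (hε : ε ∈ Set.Ioo (0 : ℝ) 1) :
    rhoTilde H (fun j => t l j + ε ^ (1 / H j) * (x j - t l j)) (t l) =
      ⨅ k : Fin m, rhoTilde H (fun j => t l j + ε ^ (1 / H j) * (x j - t l j)) (t k) := by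
  have : Nonempty (Fin N) := ⟨⟨0, hN⟩⟩
  have : Nonempty (Fin m) := ⟨l⟩
  obtain ⟨hε0, hε1⟩ := hε
  have coord : ∀ (a b : Fin N → ℝ) (j : Fin N), |a j - b j| ^ H j ≤ rhoTilde H a b :=
    fun a b j => le_ciSup (f := fun j => |a j - b j| ^ H j) (Set.finite_range _).bddAbove j
  have att : ∀ (a b : Fin N → ℝ), ∃ j, |a j - b j| ^ H j = rhoTilde H a b :=
    fun a b => exists_eq_ciSup_of_finite (f := fun j => |a j - b j| ^ H j)
  have hmin : ∀ k, rhoTilde H x (t l) ≤ rhoTilde H x (t k) := fun k => by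
    rw [hx]
    exact ciInf_le (Set.finite_range _).bddBelow k
  have hpow : ∀ j, (ε ^ (1 / H j)) ^ H j = ε := fun j => by
    rw [← Real.rpow_mul hε0.le, one_div_mul_cancel (hH j).1.ne', Real.rpow_one]
  have hle : rhoTilde H (fun j => t l j + ε ^ (1 / H j) * (x j - t l j)) (t l)
      ≤ ε * rhoTilde H x (t l) := by
    refine ciSup_le fun j => ?_
    have hδ : 0 ≤ ε ^ (1 / H j) := Real.rpow_nonneg hε0.le _
    rw [add_sub_cancel_left, abs_mul, abs_of_nonneg hδ,
      Real.mul_rpow hδ (abs_nonneg _), hpow]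
    exact mul_le_mul_of_nonneg_left (coord x (t l) j) hε0.le
  refine le_antisymm (le_ciInf fun k => hle.trans ?_)
    (ciInf_le (Set.finite_range _).bddBelow l)
  obtain ⟨j, hj⟩ := att x (t k)
  refine le_trans ?_ (coord _ (t k) j)
  have hHj := (hH j).1
  have hδ : 0 ≤ ε ^ (1 / H j) := Real.rpow_nonneg hε0.le _
  have hδ1 : ε ^ (1 / H j) ≤ 1 := Real.rpow_le_one hε0.le hε1.le (by positivity)
  have hr0 : 0 ≤ rhoTilde H x (t l) :=
    le_trans (Real.rpow_nonneg (abs_nonneg _) _) (coord x (t l) j)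
  have hR : (rhoTilde H x (t l) ^ (1 / H j)) ^ H j = rhoTilde H x (t l) := by
    rw [← Real.rpow_mul hr0, one_div_mul_cancel hHj.ne', Real.rpow_one]
  have hR0 : 0 ≤ rhoTilde H x (t l) ^ (1 / H j) := Real.rpow_nonneg hr0 _
  have h1 : |x j - t l j| ≤ rhoTilde H x (t l) ^ (1 / H j) := by
    rw [← Real.rpow_le_rpow_iff (abs_nonneg _) hR0 hHj, hR]
    exact coord x (t l) j
  have h2 : rhoTilde H x (t l) ^ (1 / H j) ≤ |x j - t k j| := by
    rw [← Real.rpow_le_rpow_iff hR0 (abs_nonneg _) hHj, hR, hj]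
    exact hmin k
  have hp := hpow j
  generalize ε ^ (1 / H j) = δ at *
  generalize rhoTilde H x (t l) ^ (1 / H j) = R at *
  have h3 : |x j - t k j| ≤ |t l j + δ * (x j - t l j) - t k j| + (1 - δ) * |x j - t l j| := by
    rw [← abs_of_nonneg (sub_nonneg.2 hδ1), ← abs_mul]
    refine le_trans (le_of_eq ?_) (abs_add_le _ _)
    congr 1
    ring
  have h4 : (1 - δ) * |x j - t l j| ≤ (1 - δ) * R :=
    mul_le_mul_of_nonneg_left h1 (sub_nonneg.2 hδ1)
  have h5 : δ * R ≤ |t l j + δ * (x j - t l j) - t k j| := by linarith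
  have h6 := Real.rpow_le_rpow (mul_nonneg hδ hR0) h5 hHj.le
  rw [Real.mul_rpow hδ hR0, hp, hR] at h6
  exact h6
end

section
/- There exists a positive integer M = M(N) depending only on N with the following property. For any bounded subset A of ℝ^N and any family 𝓑 = {Q(x) : x ∈ A} of closed intervals (rectangles) in ℝ^N such that Q(x) is centered at x for every x ∈ A and, for every two points x₁, x₂ of A, Q(x₁) and Q(x₂) can be translated to be concentric so that one is contained in the other, there exists a sequence {Q_i} in 𝓑 such that (i) A ⊆ ⋃_i Q_i, and (ii) the intervals {Q_i} can be divided into at most M families of pairwise disjoint intervals. (Lemma 2.4, Besicovitch's covering theorem for comparable intervals.) -/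
open Set

namespace BesiAux

/-- The type of an interval `[x-w,x+w]` relative to `[y-v,y+v]`. -/
noncomputable def typ (y v x w : ℝ) : Bool × Fin 16 :=
  (decide (y ≤ x),
    if |x - y| ≤ w / 2 then 0 else if 6 * v ≤ w then 1 else
      ⟨min (2 + ⌊2 * |x - y| / v⌋₊) 15, by omega⟩)

lemma coord (y v x1 w1 x2 w2 : ℝ) (hv : 0 < v) (h1 : 0 < w1) (h2 : 0 < w2)
    (h21 : 3 / 4 * w2 ≤ w1) (hv1 : 3 / 4 * v ≤ w1)
    (i1 : |x1 - y| ≤ w1 + v) (i2 : |x2 - y| ≤ w2 + v)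
    (ht : typ y v x1 w1 = typ y v x2 w2) : |x2 - x1| ≤ w1 := by
  have key : ∀ x w : ℝ, |x - y| ≤ w + v → ¬ (6 * v ≤ w) →
      2 + ⌊2 * |x - y| / v⌋₊ ≤ 15 := by
    intro x w hi hw
    have : ⌊2 * |x - y| / v⌋₊ < 14 := by
      rw [Nat.floor_lt (by positivity), div_lt_iff₀ hv]
      push_cast
      linarith
    omega
  unfold typ at ht
  rw [Prod.mk.injEq] at ht
  obtain ⟨hs, ht⟩ := ht
  have habs : |x2 - x1| = |(|x2 - y| - |x1 - y|)| := by
    rw [decide_eq_decide] at hs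
    by_cases h : y ≤ x1
    · have h' := hs.1 h
      rw [abs_of_nonneg (sub_nonneg.2 h), abs_of_nonneg (sub_nonneg.2 h')]
      congr 1; ring
    · have h' : ¬ y ≤ x2 := fun h' => h (hs.2 h')
      rw [abs_of_nonpos (by linarith : x1 - y ≤ 0), abs_of_nonpos (by linarith : x2 - y ≤ 0),
        abs_sub_comm]
      congr 1; ring
  rw [habs, abs_le]
  have n1 := abs_nonneg (x1 - y)
  have n2 := abs_nonneg (x2 - y)
  have k1 := key x1 w1 i1
  have k2 := key x2 w2 i2
  split_ifs at ht with a1 a2 a3 a4 a5 a6 a7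
  all_goals first
    | (constructor <;> linarith)
    | skip
  all_goals
    rw [Fin.ext_iff] at ht
    simp at ht
  all_goals first
    | omega
    | skip
  all_goals
    have e : ⌊2 * |x1 - y| / v⌋₊ = ⌊2 * |x2 - y| / v⌋₊ := by
      have := k1 (by linarith)
      have := k2 (by linarith)
      omega
    have f1 := Nat.floor_le (a := 2 * |x1 - y| / v) (by positivity)
    have f2 := Nat.floor_le (a := 2 * |x2 - y| / v) (by positivity)
    have g1 := Nat.lt_floor_add_one (2 * |x1 - y| / v)
    have g2 := Nat.lt_floor_add_one (2 * |x2 - y| / v)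
    rw [e] at f1 g1
    generalize (⌊2 * |x2 - y| / v⌋₊ : ℝ) = q at *
    rw [le_div_iff₀ hv] at f1 f2
    rw [div_lt_iff₀ hv] at g1 g2
    constructor <;> linarith

open Classical in
/-- Greedy colouring. -/
noncomputable def col (r : ℕ → ℕ → Prop) (n : ℕ) : ℕ :=
  sInf {a | ∀ m : Fin n, r m n → col r m ≠ a}
termination_by n
decreasing_by exact m.2

open Classical in
lemma col_spec (r : ℕ → ℕ → Prop) (M : ℕ)
    (h : ∀ n, ((Finset.range n).filter (r · n)).card < M) (n : ℕ) :
    col r n < M ∧ ∀ m < n, r m n → col r m ≠ col r n := by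
  have hex : ∃ a ∈ Finset.range M,
      a ∉ ((Finset.range n).filter (r · n)).image (col r) := by
    apply Finset.exists_mem_notMem_of_card_lt_card
    refine Finset.card_image_le.trans_lt ?_
    simpa using h n
  obtain ⟨a, ha, hna⟩ := hex
  have hmem : a ∈ {a | ∀ m : Fin n, r m n → col r m ≠ a} := by
    intro m hm hc
    apply hna
    rw [Finset.mem_image]
    exact ⟨m, by simp [hm], hc⟩
  have hs := Nat.sInf_mem ⟨a, hmem⟩
  have hle := Nat.sInf_le hmem
  rw [← col] at hs hle
  exact ⟨hle.trans_lt (by simpa using ha), fun m hm hr => hs ⟨m, hm⟩ hr⟩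

variable {N : ℕ}

lemma pick_exists (w : (Fin N → ℝ) → (Fin N → ℝ)) (D : ℝ) (R : Set (Fin N → ℝ))
    (hpos : ∀ x ∈ R, ∀ j, 0 < w x j) (hD : ∀ x ∈ R, ∀ j, w x j ≤ D)
    (hc : ∀ x₁ ∈ R, ∀ x₂ ∈ R, (∀ j, w x₁ j ≤ w x₂ j) ∨ (∀ j, w x₂ j ≤ w x₁ j))
    (hne : R.Nonempty) : ∃ x ∈ R, ∀ z ∈ R, ∀ j, 3 / 4 * w z j ≤ w x j := by
  have h1 : ∀ j, ∃ x ∈ R, ∀ z ∈ R, 3 / 4 * w z j ≤ w x j := by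
    intro j
    have hb : BddAbove ((fun x => w x j) '' R) := ⟨D, by
      rintro _ ⟨x, hx, rfl⟩; exact hD x hx j⟩
    obtain ⟨x0, hx0⟩ := hne
    have hS : 0 < sSup ((fun x => w x j) '' R) :=
      (hpos x0 hx0 j).trans_le (le_csSup hb ⟨x0, hx0, rfl⟩)
    obtain ⟨_, ⟨x, hx, rfl⟩, hlt⟩ := exists_lt_of_lt_csSup
      (⟨_, x0, hx0, rfl⟩ : ((fun x => w x j) '' R).Nonempty)
      (by linarith : 3 / 4 * sSup ((fun x => w x j) '' R) < sSup ((fun x => w x j) '' R))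
    refine ⟨x, hx, fun z hz => ?_⟩
    have := le_csSup hb ⟨z, hz, rfl⟩
    simp only at this hlt
    linarith
  choose g hg hg' using h1
  have h2 : ∀ F : Finset (Fin N), ∃ x ∈ R, ∀ i ∈ F, ∀ j, w (g i) j ≤ w x j := by
    intro F
    induction F using Finset.induction_on with
    | empty => obtain ⟨x, hx⟩ := hne; exact ⟨x, hx, by simp⟩
    | insert a F ha ih =>
      obtain ⟨x, hx, h⟩ := ih
      rcases hc x hx (g a) (hg a) with h' | h'
      · refine ⟨g a, hg a, fun i hi j => ?_⟩
        rcases Finset.mem_insert.1 hi with rfl | hi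
        · exact le_rfl
        · exact (h i hi j).trans (h' j)
      · refine ⟨x, hx, fun i hi j => ?_⟩
        rcases Finset.mem_insert.1 hi with rfl | hi
        · exact h' j
        · exact h i hi j
  obtain ⟨x, hx, h⟩ := h2 Finset.univ
  exact ⟨x, hx, fun z hz j => (hg' j z hz).trans (h j (Finset.mem_univ _) j)⟩

lemma main (w : (Fin N → ℝ) → (Fin N → ℝ)) (D : ℝ) (A : Set (Fin N → ℝ))
    (hA : Bornology.IsBounded A)
    (hpos : ∀ x ∈ A, ∀ j, 0 < w x j) (hD : ∀ x ∈ A, ∀ j, w x j ≤ D)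
    (hc : ∀ x₁ ∈ A, ∀ x₂ ∈ A, (∀ j, w x₁ j ≤ w x₂ j) ∨ (∀ j, w x₂ j ≤ w x₁ j)) :
    ∃ s : Set (Fin N → ℝ), s.Countable ∧ s ⊆ A ∧
      (∀ y ∈ A, ∃ x ∈ s, ∀ k, |y k - x k| ≤ w x k) ∧
      ∃ f : (Fin N → ℝ) → Fin (Fintype.card (Fin N → Bool × Fin 16) + 1),
        ∀ x ∈ s, ∀ y ∈ s, x ≠ y → f x = f y → ∃ k, w x k + w y k < |x k - y k| := by
  classical
  have hp : ∀ R : Set (Fin N → ℝ), ∃ x, R ⊆ A → R.Nonempty →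
      x ∈ R ∧ ∀ z ∈ R, ∀ j, 3 / 4 * w z j ≤ w x j := by
    intro R
    by_cases h : R ⊆ A ∧ R.Nonempty
    · obtain ⟨x, hx⟩ := pick_exists w D R (fun x hx => hpos x (h.1 hx))
        (fun x hx => hD x (h.1 hx)) (fun x hx y hy => hc x (h.1 hx) y (h.1 hy)) h.2
      exact ⟨x, fun _ _ => hx⟩
    · exact ⟨0, fun a b => absurd ⟨a, b⟩ h⟩
  choose pick hpick using hp
  let step : Set (Fin N → ℝ) → Set (Fin N → ℝ) :=
    fun R => {y ∈ R | ¬ ∀ k, |y k - pick R k| ≤ w (pick R) k}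
  let R : ℕ → Set (Fin N → ℝ) := fun n => step^[n] A
  have hR0 : R 0 = A := rfl
  have hRs : ∀ n, R (n + 1) = step (R n) := fun n => Function.iterate_succ_apply' _ _ _
  have hanti : Antitone R := antitone_nat_of_succ_le fun n => by
    rw [hRs]; exact Set.sep_subset _ _
  have hRA : ∀ n, R n ⊆ A := fun n => hanti (Nat.zero_le n)
  let x : ℕ → (Fin N → ℝ) := fun n => pick (R n)
  have hx : ∀ n, (R n).Nonempty → x n ∈ R n ∧ ∀ z ∈ R n, ∀ j, 3 / 4 * w z j ≤ w (x n) j :=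
    fun n hn => hpick _ (hRA n) hn
  have hlt : ∀ m n, m < n → (R n).Nonempty → (R m).Nonempty ∧
      (∀ j, 3 / 4 * w (x n) j ≤ w (x m) j) ∧ ∃ k, w (x m) k < |x n k - x m k| := by
    intro m n hmn hn
    have hxn := (hx n hn).1
    have hm : (R m).Nonempty := ⟨x n, hanti hmn.le hxn⟩
    refine ⟨hm, (hx m hm).2 _ (hanti hmn.le hxn), ?_⟩
    have := hanti (Nat.succ_le_of_lt hmn) hxn
    rw [Nat.succ_eq_add_one, hRs] at this
    have h2 := this.2
    push Not at h2
    exact h2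
  -- colouring
  let r : ℕ → ℕ → Prop := fun m n => (R n).Nonempty ∧
    ∀ k, |x m k - x n k| ≤ w (x m) k + w (x n) k
  have hcard : ∀ n, ((Finset.range n).filter (r · n)).card <
      Fintype.card (Fin N → Bool × Fin 16) + 1 := by
    intro n
    rw [Nat.lt_succ_iff]
    refine Finset.card_le_card_of_injOn (t := Finset.univ)
      (fun m k => typ (x n k) (w (x n) k) (x m k) (w (x m) k)) (by simp) ?_
    have hh : ∀ m m', m < m' → m' < n → r m n → r m' n →
        (fun k => typ (x n k) (w (x n) k) (x m k) (w (x m) k)) ≠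
        (fun k => typ (x n k) (w (x n) k) (x m' k) (w (x m') k)) := by
      intro m m' h1 h2 r1 r2 he
      obtain ⟨a1, a2, -⟩ := hlt m' n h2 r1.1
      obtain ⟨b1, b2, k, hk⟩ := hlt m m' h1 a1
      obtain ⟨c1, c2, -⟩ := hlt m n (h1.trans h2) r1.1
      have p : ∀ i, (R i).Nonempty → 0 < w (x i) k := fun i hi =>
        hpos _ (hRA i (hx i hi).1) k
      exact absurd (coord _ _ _ _ _ _ (p n r1.1) (p m b1) (p m' a1) (b2 k) (c2 k)
        (r1.2 k) (r2.2 k) (congrFun he k)) (not_le.2 hk)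
    intro m hm m' hm' he
    simp only [Finset.coe_filter, Finset.mem_range, Set.mem_ofPred_eq] at hm hm'
    rcases lt_trichotomy m m' with h | h | h
    · exact absurd he (hh m m' h hm'.1 hm.2 hm'.2)
    · exact h
    · exact absurd he.symm (hh m' m h hm.1 hm'.2 hm.2)
  have hcol := col_spec r (Fintype.card (Fin N → Bool × Fin 16) + 1)
    (fun n => by convert hcard n)
  refine ⟨x '' {n | (R n).Nonempty}, (Set.to_countable _).image _, ?_, ?_, ?_⟩
  · rintro _ ⟨n, hn, rfl⟩
    exact hRA n (hx n hn).1
  · intro y hy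
    by_contra! hcon
    have hyR : ∀ n, y ∈ R n := by
      intro n
      induction n with
      | zero => exact hy
      | succ n ih =>
        rw [hRs]
        refine ⟨ih, ?_⟩
        push Not
        exact hcon (x n) ⟨n, ⟨y, ih⟩, rfl⟩
    have hne : ∀ n, (R n).Nonempty := fun n => ⟨y, hyR n⟩
    obtain ⟨a, -, φ, hφ, hlim⟩ := tendsto_subseq_of_bounded hA
      (fun n => hRA n (hx n (hne n)).1)
    have hev : ∀ᶠ n in Filter.atTop, ∀ k, |x (φ n) k - a k| < 3 / 8 * w y k := by
      rw [Filter.eventually_all]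
      intro k
      have h1 := (tendsto_pi_nhds.1 hlim) k
      exact (Metric.tendsto_nhds.1 h1) _ (by have := hpos y hy k; linarith)
    obtain ⟨n, hn⟩ := Filter.eventually_atTop.1 hev
    obtain ⟨-, -, k, hk⟩ := hlt (φ n) (φ (n + 1)) (hφ (Nat.lt_succ_self n)) (hne _)
    have e1 := hn n le_rfl k
    have e2 := hn (n + 1) (Nat.le_succ n) k
    have e3 := (hx (φ n) (hne _)).2 y (hyR _) k
    have e4 := abs_sub_le (x (φ (n + 1)) k) (a k) (x (φ n) k)
    rw [abs_sub_comm (a k)] at e4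
    linarith
  · refine ⟨fun z => ⟨col r (Function.invFunOn x {n | (R n).Nonempty} z), (hcol _).1⟩, ?_⟩
    intro z hz z' hz' hne he
    have a1 := Function.invFunOn_mem hz
    have a2 := Function.invFunOn_eq hz
    have b1 := Function.invFunOn_mem hz'
    have b2 := Function.invFunOn_eq hz'
    simp only [Fin.mk.injEq] at he
    generalize Function.invFunOn x {n | (R n).Nonempty} z = m at *
    generalize Function.invFunOn x {n | (R n).Nonempty} z' = n at *
    subst a2 b2
    by_contra! hcon
    rcases lt_trichotomy m n with h | h | h
    · exact (hcol n).2 m h ⟨b1, hcon⟩ he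
    · exact hne (by rw [h])
    · refine (hcol m).2 n h ⟨a1, fun k => ?_⟩ he.symm
      rw [abs_sub_comm, add_comm]
      exact hcon k

end BesiAux

/-- Lemma 2.4 (Besicovitch's covering theorem for comparable closed intervals).
There is `M = M(N)` such that: for every bounded set `A ⊆ ℝ^N` and every family of
closed intervals `Q(x) = ∏_j [x_j - w(x)_j, x_j + w(x)_j]` centered at the points
`x ∈ A` which are pairwise comparable (any two of them can be translated to be
concentric with one contained in the other, i.e. their half-width vectors are
comparable coordinatewise), there is a countable subfamily, centered at points of a
countable set `s ⊆ A`, which covers `A` and which can be divided into at most `M`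
families of pairwise disjoint intervals. -/
theorem besicovitch_comparable_intervals (N : ℕ) (hN : 1 ≤ N) :
    ∃ M : ℕ, 0 < M ∧
      ∀ A : Set (Fin N → ℝ), Bornology.IsBounded A →
      ∀ w : (Fin N → ℝ) → (Fin N → ℝ),
        (∀ x ∈ A, ∀ j, 0 < w x j) →
        (∀ x₁ ∈ A, ∀ x₂ ∈ A, (∀ j, w x₁ j ≤ w x₂ j) ∨ (∀ j, w x₂ j ≤ w x₁ j)) →
        ∃ s : Set (Fin N → ℝ), s.Countable ∧ s ⊆ A ∧
          (A ⊆ ⋃ x ∈ s, Set.Icc (x - w x) (x + w x)) ∧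
          ∃ f : (Fin N → ℝ) → Fin M,
            ∀ x ∈ s, ∀ y ∈ s, x ≠ y → f x = f y →
              Disjoint (Set.Icc (x - w x) (x + w x)) (Set.Icc (y - w y) (y + w y)) := by
  refine ⟨Fintype.card (Fin N → Bool × Fin 16) + 1, Nat.succ_pos _, ?_⟩
  intro A hA w hpos hc
  obtain ⟨C, hC⟩ := Metric.isBounded_iff.1 hA
  have hC' : ∀ x ∈ A, ∀ y ∈ A, ∀ k, |x k - y k| ≤ max C 1 := fun x hx y hy k =>
    ((dist_le_pi_dist x y k).trans (hC hx hy)).trans (le_max_left _ _)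
  have hD0 : (0 : ℝ) < max C 1 := lt_max_of_lt_right one_pos
  generalize max C 1 = D at *
  obtain ⟨s, hs, hsA, hcov, f, hf⟩ := BesiAux.main (fun x j => min (w x j) D) D A hA
    (fun x hx j => lt_min (hpos x hx j) hD0) (fun x hx j => min_le_right _ _)
    (fun x hx y hy => (hc x hx y hy).imp (fun h j => min_le_min_right _ (h j))
      (fun h j => min_le_min_right _ (h j)))
  refine ⟨s, hs, hsA, ?_, f, ?_⟩
  · intro y hy
    obtain ⟨x, hx, h⟩ := hcov y hy
    simp only [Set.mem_iUnion]
    refine ⟨x, hx, fun k => ?_, fun k => ?_⟩ <;>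
    · have h1 := abs_le.1 ((h k).trans (min_le_left _ _))
      simp only [Pi.sub_apply, Pi.add_apply]
      linarith [h1.1, h1.2]
  · intro x hx y hy hne he
    obtain ⟨k, hk⟩ := hf x hx y hy hne he
    have h1 := hC' x (hsA hx) y (hsA hy) k
    have px := hpos x (hsA hx) k
    have py := hpos y (hsA hy) k
    have qx : min (w x k) D = w x k := by
      rcases min_choice (w x k) D with h | h
      · exact h
      · have := lt_min py hD0
        simp only [h] at hk
        linarith
    have qy : min (w y k) D = w y k := by
      rcases min_choice (w y k) D with h | h
      · exact h
      · have := lt_min px hD0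
        simp only [h] at hk
        linarith
    simp only [qx, qy] at hk
    rw [Set.disjoint_left]
    intro z hz hz'
    have a1 := hz.1 k
    have a2 := hz.2 k
    have b1 := hz'.1 k
    have b2 := hz'.2 k
    simp only [Pi.sub_apply, Pi.add_apply] at a1 a2 b1 b2
    have : |x k - y k| ≤ w x k + w y k := by
      rw [abs_le]; constructor <;> linarith
    linarith
end
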